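/- Let λ and λ' be ordered weight vectors with λ1 > 1/2 and λ1' > 1/2 (i.e. both Bell-diagonal states are entangled). If ρ_BD(λ) can be transformed to ρ_BD(λ') by SLOCC, then: λ1 ≥ λ1'; (1−2λ2)·(λ3'+λ4') ≥ (1−2λ2')·(λ3+λ4); and (1−2λ2−2λ3)·λ4' ≥ (1−2λ2'−2λ3')·λ4. -/

import Mathlib

open Matrix Complex
open scoped Kronecker ComplexOrder

noncomputable section
namespace Paper

abbrev Q2 := Fin 2 × Fin 2
abbrev M4 := Matrix Q2 Q2 ℂ
abbrev M16 := Matrix (Q2 × Q2) (Q2 × Q2) ℂ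

/-- `1/√2` as a complex number. -/
def invSqrt2 : ℂ := ((Real.sqrt 2)⁻¹ : ℝ)

/-- The four Bell states `|Φ₁⟩,…,|Φ₄⟩` as vectors in `ℂ²⊗ℂ²`
(product basis indexed by `Fin 2 × Fin 2`). -/
def bell : Fin 4 → Q2 → ℂ :=
  ![fun p => !![invSqrt2, 0; 0, invSqrt2] p.1 p.2,
    fun p => !![invSqrt2, 0; 0, -invSqrt2] p.1 p.2,
    fun p => !![0, invSqrt2; invSqrt2, 0] p.1 p.2,
    fun p => !![0, invSqrt2; -invSqrt2, 0] p.1 p.2]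

/-- The Bell projectors `Π_i = |Φ_i⟩⟨Φ_i|`. -/
def BellProj (i : Fin 4) : M4 := vecMulVec (bell i) (star (bell i))

/-- The Pauli matrices `σ_x, σ_y, σ_z`. -/
def pauli : Fin 3 → Matrix (Fin 2) (Fin 2) ℂ :=
  ![!![0, 1; 1, 0], !![0, -I; I, 0], !![1, 0; 0, -1]]

/-- Reindexing `((a',b'),(a'',b'')) ↦ ((a',a''),(b',b''))`. -/
def swapMid : (Q2 × Q2) ≃ (Q2 × Q2) where
  toFun p := ((p.1.1, p.2.1), (p.1.2, p.2.2))
  invFun p := ((p.1.1, p.2.1), (p.1.2, p.2.2))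
  left_inv _ := rfl
  right_inv _ := rfl

/-- The rank-one matrix `x x†`. -/
def pureMat {d : Type*} (x : d → ℂ) : Matrix d d ℂ := vecMulVec x (star x)

/-- Separability of a 16×16 four-qubit matrix (qubit order A',B',A'',B'')
across the partition A = (A',A''), B = (B',B''). -/
def SepAB (ρ : M16) : Prop :=
  ∃ (n : ℕ) (x y : Fin n → Q2 → ℂ),
    (Matrix.reindex swapMid swapMid ρ) = ∑ k, (pureMat (x k)) ⊗ₖ (pureMat (y k))


/-- `ρ` can be transformed to `ρ'` by SLOCC: `ρ' = c·Σ_k (A_k⊗B_k) ρ (A_k⊗B_k)†`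
for finitely many local Kraus pairs and some `c > 0`. -/
def SLOCCto (ρ ρ' : M4) : Prop :=
  ∃ (N : ℕ) (A B : Fin N → Matrix (Fin 2) (Fin 2) ℂ) (c : ℝ),
    0 < c ∧ ρ' = (c : ℂ) • ∑ k, (A k ⊗ₖ B k) * ρ * (A k ⊗ₖ B k)ᴴ

/-- `ρ` and `ρ'` are SLOCC equivalent. -/
def SLOCCequiv (ρ ρ' : M4) : Prop := SLOCCto ρ ρ' ∧ SLOCCto ρ' ρ

/-- The Bell-diagonal state with weight vector `l`. -/
def rhoBD (l : Fin 4 → ℝ) : M4 := ∑ i, (l i : ℂ) • BellProj i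

/-- `l` is a weight vector: nonnegative entries summing to `1`. -/
def IsWeight (l : Fin 4 → ℝ) : Prop := (∀ i, 0 ≤ l i) ∧ ∑ i, l i = 1

/-- `l` is ordered: `λ₁ ≥ λ₂ ≥ λ₃ ≥ λ₄`. -/
def IsOrdered (l : Fin 4 → ℝ) : Prop := l 1 ≤ l 0 ∧ l 2 ≤ l 1 ∧ l 3 ≤ l 2

/-- A two-qubit density matrix. -/
def IsDensity (ρ : M4) : Prop := ρ.PosSemidef ∧ ρ.trace = 1

/-- Separability of a two-qubit matrix. -/
def Sep2 (ρ : M4) : Prop :=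
  ∃ (N : ℕ) (x y : Fin N → Fin 2 → ℂ),
    ρ = ∑ k, (pureMat (x k)) ⊗ₖ (pureMat (y k))

/-- Magic basis (scaled by `√2`). -/
def mg : Fin 4 → Fin 2 → Fin 2 → ℂ :=
  ![![![1, 0], ![0, 1]], ![![I, 0], ![0, -I]], ![![0, I], ![I, 0]], ![![0, 1], ![-1, 0]]]

def mgc : Fin 4 → Fin 2 → Fin 2 → ℂ :=
  ![![![1, 0], ![0, 1]], ![![-I, 0], ![0, I]], ![![0, -I], ![-I, 0]], ![![0, 1], ![-1, 0]]]

def OO (A B : Matrix (Fin 2) (Fin 2) ℂ) (j i : Fin 4) : ℂ :=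
  (1 / 2) * ∑ p, ∑ q, ∑ r, ∑ s, mgc j p q * A p r * B q s * mg i r s

lemma OO_col (A B : Matrix (Fin 2) (Fin 2) ℂ) (i i' : Fin 4) :
    ∑ j, OO A B j i * OO A B j i' = if i = i' then A.det * B.det else 0 := by
  fin_cases i <;> fin_cases i' <;>
    simp [OO, mg, mgc, Fin.sum_univ_four, Fin.sum_univ_two, Matrix.det_fin_two] <;>
    grind [I_sq]

lemma OO_row (A B : Matrix (Fin 2) (Fin 2) ℂ) (i i' : Fin 4) :
    ∑ j, OO A B i j * OO A B i' j = if i = i' then A.det * B.det else 0 := by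
  fin_cases i <;> fin_cases i' <;>
    simp [OO, mg, mgc, Fin.sum_univ_four, Fin.sum_univ_two, Matrix.det_fin_two] <;>
    grind [I_sq]

lemma invSqrt2_sq : invSqrt2 * invSqrt2 = 1 / 2 := by
  unfold invSqrt2
  rw [← Complex.ofReal_mul, ← mul_inv, Real.mul_self_sqrt (by norm_num)]
  norm_num

lemma star_invSqrt2 : (starRingEnd ℂ) invSqrt2 = invSqrt2 := by
  unfold invSqrt2
  exact Complex.conj_ofReal _

def ph : Fin 4 → ℂ := ![1, I, I, 1]

lemma bell_eq (i : Fin 4) (p : Q2) : ph i * bell i p = invSqrt2 * mg i p.1 p.2 := by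
  obtain ⟨a, b⟩ := p
  fin_cases i <;> fin_cases a <;> fin_cases b <;> simp [ph, bell, mg, mul_comm]

lemma bellc_eq (i : Fin 4) (p : Q2) :
    star (ph i) * star (bell i p) = invSqrt2 * mgc i p.1 p.2 := by
  obtain ⟨a, b⟩ := p
  fin_cases i <;> fin_cases a <;> fin_cases b <;>
    simp [ph, bell, mgc, mul_comm, star_invSqrt2]

lemma bracket_eq (A B : Matrix (Fin 2) (Fin 2) ℂ) (j i : Fin 4) :
    star (ph j) * ph i * (star (bell j) ⬝ᵥ (A ⊗ₖ B) *ᵥ bell i) = OO A B j i := by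
  have : star (ph j) * ph i * (star (bell j) ⬝ᵥ (A ⊗ₖ B) *ᵥ bell i)
      = ∑ p : Q2, ∑ r : Q2, (star (ph j) * star (bell j p)) * (A ⊗ₖ B) p r
          * (ph i * bell i r) := by
    simp only [dotProduct, mulVec, Finset.mul_sum, Pi.star_apply]
    refine Finset.sum_congr rfl fun p _ => Finset.sum_congr rfl fun r _ => by ring
  rw [this]
  simp only [bell_eq, bellc_eq, OO, Finset.mul_sum, Fintype.sum_prod_type, kroneckerMap_apply]
  rw [← invSqrt2_sq]
  refine Finset.sum_congr rfl fun p _ => Finset.sum_congr rfl fun q _ =>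
    Finset.sum_congr rfl fun r _ => Finset.sum_congr rfl fun s _ => by ring

lemma ph_norm (i : Fin 4) : normSq (ph i) = 1 := by
  fin_cases i <;> simp [ph]

lemma bracket_normSq (A B : Matrix (Fin 2) (Fin 2) ℂ) (j i : Fin 4) :
    normSq (star (bell j) ⬝ᵥ (A ⊗ₖ B) *ᵥ bell i) = normSq (OO A B j i) := by
  rw [← bracket_eq, map_mul, map_mul, ph_norm]
  have : normSq (star (ph j)) = 1 := by
    rw [← ph_norm j]; exact normSq_conj _
  rw [this]; ring

lemma quad (v b : Q2 → ℂ) (X : M4) :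
    star v ⬝ᵥ (X * vecMulVec b (star b) * Xᴴ) *ᵥ v = (normSq (star v ⬝ᵥ X *ᵥ b) : ℂ) := by
  rw [← mulVec_mulVec, ← mulVec_mulVec, vecMulVec_mulVec, ← mul_conj]
  have h2 : star b ⬝ᵥ Xᴴ *ᵥ v = (starRingEnd ℂ) (star v ⬝ᵥ X *ᵥ b) := by
    rw [starRingEnd_apply, star_dotProduct, star_mulVec, conjTranspose_conjTranspose,
      ← dotProduct_mulVec]
  rw [h2]
  simp [mulVec_smul, mul_comm]

lemma bell_orth (j i : Fin 4) : star (bell j) ⬝ᵥ bell i = if j = i then 1 else 0 := by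
  have h := invSqrt2_sq
  fin_cases i <;> fin_cases j <;>
    simp [dotProduct, Fintype.sum_prod_type, bell, star_invSqrt2, h] <;> norm_num

lemma rhoBD_coef (l : Fin 4 → ℝ) (j : Fin 4) :
    star (bell j) ⬝ᵥ (rhoBD l) *ᵥ bell j = (l j : ℂ) := by
  have h : ∀ i, star (bell j) ⬝ᵥ (BellProj i) *ᵥ bell j = if j = i then 1 else 0 := by
    intro i
    have := quad (bell j) (bell i) 1
    simp only [Matrix.one_mul, conjTranspose_one, Matrix.mul_one, one_mulVec] at this
    rw [BellProj, this, bell_orth]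
    split_ifs <;> simp
  simp [rhoBD, sum_mulVec, dotProduct_sum, smul_mulVec, h]

lemma weights (l l' : Fin 4 → ℝ) (N : ℕ) (A B : Fin N → Matrix (Fin 2) (Fin 2) ℂ) (c : ℝ)
    (h : rhoBD l' = (c : ℂ) • ∑ k, (A k ⊗ₖ B k) * rhoBD l * (A k ⊗ₖ B k)ᴴ) (j : Fin 4) :
    l' j = c * ∑ k, ∑ i, l i * normSq (OO (A k) (B k) j i) := by
  have h1 := rhoBD_coef l' j
  rw [h] at h1
  simp only [rhoBD, Matrix.mul_sum, Matrix.sum_mul, smul_mulVec, sum_mulVec, dotProduct_sum,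
    dotProduct_smul, Matrix.mul_smul, Matrix.smul_mul, BellProj, quad, bracket_normSq,
    smul_eq_mul] at h1
  exact_mod_cast h1.symm

lemma nsum (z : Fin 4 → ℂ) : ‖∑ j, z j * z j‖ ≤ ∑ j, normSq (z j) := by
  refine (norm_sum_le _ _).trans (le_of_eq ?_)
  simp [normSq_eq_norm_sq, sq]

/-- one entry against the others -/
lemma nsub (z : Fin 4 → ℂ) :
    normSq (z 0) - normSq (z 1) - normSq (z 2) - normSq (z 3) ≤ ‖∑ j, z j * z j‖ := by
  simp only [Fin.sum_univ_four, normSq_eq_norm_sq]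
  have e : z 0 * z 0 = (z 0 * z 0 + z 1 * z 1 + z 2 * z 2 + z 3 * z 3)
    - (z 1 * z 1 + z 2 * z 2 + z 3 * z 3) := by ring
  have h := norm_sub_le (z 0 * z 0 + z 1 * z 1 + z 2 * z 2 + z 3 * z 3)
    (z 1 * z 1 + z 2 * z 2 + z 3 * z 3)
  rw [← e] at h
  have h3 := norm_add₃_le (a := z 1 * z 1) (b := z 2 * z 2) (c := z 3 * z 3)
  simp only [norm_mul] at h h3
  nlinarith

lemma para (a b : ℂ) : normSq (a + I * b) + normSq (a - I * b) = 2 * (normSq a + normSq b) := by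
  simp [normSq_apply]; ring

lemma pair_sep (u v : Fin 4 → ℂ) (d : ℂ) (hu : ∑ j, u j * u j = d) (hv : ∑ j, v j * v j = d)
    (huv : ∑ j, u j * v j = 0) :
    normSq (u 0) - normSq (u 1) - normSq (u 2) - normSq (u 3) +
    (normSq (v 0) - normSq (v 1) - normSq (v 2) - normSq (v 3)) ≤ 0 := by
  have h1 := nsub (fun j => u j + I * v j)
  have h2 := nsub (fun j => u j - I * v j)
  have e1 : ∑ j, (u j + I * v j) * (u j + I * v j) = 0 := by
    simp only [Fin.sum_univ_four] at *
    grind [I_sq]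
  have e2 : ∑ j, (u j - I * v j) * (u j - I * v j) = 0 := by
    simp only [Fin.sum_univ_four] at *
    grind [I_sq]
  rw [e1, norm_zero] at h1
  rw [e2, norm_zero] at h2
  have p0 := para (u 0) (v 0)
  have p1 := para (u 1) (v 1)
  have p2 := para (u 2) (v 2)
  have p3 := para (u 3) (v 3)
  linarith

lemma pair_three (x y : Fin 4 → ℂ) (d : ℂ) (hx : ∑ j, x j * x j = d) (hy : ∑ j, y j * y j = d)
    (hxy : ∑ j, x j * y j = 0) :
    ‖d‖ ≤ normSq (x 0) + normSq (x 1) + normSq (x 2) +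
      (normSq (y 0) + normSq (y 1) + normSq (y 2)) := by
  set z : Fin 4 → ℂ := fun j => x j + I * y j with hz
  set w : Fin 4 → ℂ := fun j => x j - I * y j with hw
  have e1 : z 3 * z 3 = -(z 0 * z 0 + z 1 * z 1 + z 2 * z 2) := by
    simp only [Fin.sum_univ_four, hz] at *
    grind [I_sq]
  have e2 : w 3 * w 3 = -(w 0 * w 0 + w 1 * w 1 + w 2 * w 2) := by
    simp only [Fin.sum_univ_four, hw] at *
    grind [I_sq]
  have e3 : 2 * d = (z 0 * w 0 + z 1 * w 1 + z 2 * w 2) + z 3 * w 3 := by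
    simp only [Fin.sum_univ_four, hw, hz] at *
    grind [I_sq]
  have p0 := para (x 0) (y 0)
  have p1 := para (x 1) (y 1)
  have p2 := para (x 2) (y 2)
  change normSq (z 0) + normSq (w 0) = _ at p0
  change normSq (z 1) + normSq (w 1) = _ at p1
  change normSq (z 2) + normSq (w 2) = _ at p2
  clear_value z w
  simp only [normSq_eq_norm_sq] at *
  have n1 : ‖z 3‖ * ‖z 3‖ ≤ ‖z 0‖ * ‖z 0‖ + ‖z 1‖ * ‖z 1‖ + ‖z 2‖ * ‖z 2‖ := by
    have h3 := norm_add₃_le (a := z 0 * z 0) (b := z 1 * z 1) (c := z 2 * z 2)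
    rw [← norm_neg, ← e1] at h3
    simpa only [norm_mul] using h3
  have n2 : ‖w 3‖ * ‖w 3‖ ≤ ‖w 0‖ * ‖w 0‖ + ‖w 1‖ * ‖w 1‖ + ‖w 2‖ * ‖w 2‖ := by
    have h3 := norm_add₃_le (a := w 0 * w 0) (b := w 1 * w 1) (c := w 2 * w 2)
    rw [← norm_neg, ← e2] at h3
    simpa only [norm_mul] using h3
  have n3 : 2 * ‖d‖ ≤ ‖z 0‖ * ‖w 0‖ + ‖z 1‖ * ‖w 1‖ + ‖z 2‖ * ‖w 2‖ + ‖z 3‖ * ‖w 3‖ := by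
    have h3 := norm_add₃_le (a := z 0 * w 0) (b := z 1 * w 1) (c := z 2 * w 2)
    have h4 := norm_add_le (z 0 * w 0 + z 1 * w 1 + z 2 * w 2) (z 3 * w 3)
    rw [← e3] at h4
    simp only [norm_mul, Complex.norm_ofNat] at h3 h4
    linarith
  nlinarith [sq_nonneg (‖z 0‖ - ‖w 0‖), sq_nonneg (‖z 1‖ - ‖w 1‖), sq_nonneg (‖z 2‖ - ‖w 2‖),
    sq_nonneg (‖z 3‖ - ‖w 3‖)]

/-- the three inequalities for a single Kraus operator -/
lemma single (O : Fin 4 → Fin 4 → ℂ) (d : ℂ)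
    (hc : ∀ i i', ∑ j, O j i * O j i' = if i = i' then d else 0)
    (hr : ∀ i i', ∑ j, O i j * O i' j = if i = i' then d else 0)
    (l m : Fin 4 → ℝ) (hm : ∀ j, m j = ∑ i, l i * normSq (O j i))
    (h0 : ∀ i, 0 ≤ l i) (ho : IsOrdered l) (hp : 0 ≤ l 0 - l 1 - l 2 - l 3) :
    (m 0 - m 1 - m 2 - m 3) * (l 0 + l 1 + l 2 + l 3)
      ≤ (l 0 - l 1 - l 2 - l 3) * (m 0 + m 1 + m 2 + m 3) ∧
    (m 0 - m 1 - m 2 - m 3) * (l 2 + l 3) ≤ (l 0 - l 1 - l 2 - l 3) * (m 2 + m 3) ∧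
    (m 0 - m 1 - m 2 - m 3) * l 3 ≤ (l 0 - l 1 - l 2 - l 3) * m 3 := by
  obtain ⟨o1, o2, o3⟩ := ho
  have c0 := nsum (fun j => O j 0)
  have c1 := nsum (fun j => O j 1)
  have c2 := nsum (fun j => O j 2)
  have c3 := nsum (fun j => O j 3)
  have r2 := nsum (fun j => O 2 j)
  have r3 := nsum (fun j => O 3 j)
  have q0 := nsub (fun j => O j 0)
  have s1 := pair_sep (fun j => O j 0) (fun j => O j 1) d (by simpa using hc 0 0)
    (by simpa using hc 1 1) (by simpa using hc 0 1)
  have s2 := pair_sep (fun j => O j 0) (fun j => O j 2) d (by simpa using hc 0 0)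
    (by simpa using hc 2 2) (by simpa using hc 0 2)
  have s3 := pair_sep (fun j => O j 0) (fun j => O j 3) d (by simpa using hc 0 0)
    (by simpa using hc 3 3) (by simpa using hc 0 3)
  have t := pair_three (fun j => O 2 j) (fun j => O 3 j) d (by simpa using hr 2 2)
    (by simpa using hr 3 3) (by simpa using hr 2 3)
  simp only [hc, hr, if_true] at c0 c1 c2 c3 r2 r3 q0
  simp only [Fin.sum_univ_four] at c0 c1 c2 c3 r2 r3 hm
  have nn : ∀ j i, 0 ≤ normSq (O j i) := fun j i => normSq_nonneg _
  generalize hM : (fun j i => normSq (O j i)) = M at *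
  have hM' : ∀ j i, normSq (O j i) = M j i := fun j i => by rw [← hM]
  simp only [hM'] at *
  have hd : 0 ≤ ‖d‖ := norm_nonneg d
  generalize ‖d‖ = δ at *
  -- key bounds
  have P : m 0 - m 1 - m 2 - m 3 ≤ δ * (l 0 - l 1 - l 2 - l 3) := by
    have a0 := mul_le_mul_of_nonneg_left q0 hp
    have a1 := mul_le_mul_of_nonneg_left s1 (h0 1)
    have a2 := mul_le_mul_of_nonneg_left s2 (h0 2)
    have a3 := mul_le_mul_of_nonneg_left s3 (h0 3)
    simp only [hm]
    linarith
  have T : δ * (l 0 + l 1 + l 2 + l 3) ≤ m 0 + m 1 + m 2 + m 3 := by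
    have a0 := mul_le_mul_of_nonneg_left c0 (h0 0)
    have a1 := mul_le_mul_of_nonneg_left c1 (h0 1)
    have a2 := mul_le_mul_of_nonneg_left c2 (h0 2)
    have a3 := mul_le_mul_of_nonneg_left c3 (h0 3)
    simp only [hm]
    linarith
  have S4 : δ * l 3 ≤ m 3 := by
    have a := mul_le_mul_of_nonneg_left r3 (h0 3)
    have b0 := mul_le_mul_of_nonneg_right (show l 3 ≤ l 0 by linarith) (nn 3 0)
    have b1 := mul_le_mul_of_nonneg_right (show l 3 ≤ l 1 by linarith) (nn 3 1)
    have b2 := mul_le_mul_of_nonneg_right (show l 3 ≤ l 2 by linarith) (nn 3 2)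
    simp only [hm]
    linarith
  have S34 : δ * (l 2 + l 3) ≤ m 2 + m 3 := by
    have a := mul_le_mul_of_nonneg_left (add_le_add r2 r3) (h0 3)
    have b := mul_le_mul_of_nonneg_left t (sub_nonneg.2 o3)
    have b0 := mul_le_mul_of_nonneg_right (show l 2 ≤ l 0 by linarith) (add_nonneg (nn 2 0) (nn 3 0))
    have b1 := mul_le_mul_of_nonneg_right (show l 2 ≤ l 1 by linarith) (add_nonneg (nn 2 1) (nn 3 1))
    simp only [hm]
    linarith
  have key : ∀ s s' : ℝ, 0 ≤ s → δ * s ≤ s' →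
      (m 0 - m 1 - m 2 - m 3) * s ≤ (l 0 - l 1 - l 2 - l 3) * s' := by
    intro s s' hs hs'
    have a := mul_le_mul_of_nonneg_right P hs
    have b := mul_le_mul_of_nonneg_left hs' hp
    linarith
  exact ⟨key _ _ (by linarith [h0 0, h0 1, h0 2, h0 3]) T,
    key _ _ (by linarith [h0 2, h0 3]) S34, key _ _ (h0 3) S4⟩

/-- if two entangled ordered Bell-diagonal states satisfy
`ρ_BD(λ) → ρ_BD(λ')` under SLOCC, then the three monotone inequalities
`E_i(λ) ≥ E_i(λ')` hold (in cross-multiplied form). -/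
theorem stmt13 (l l' : Fin 4 → ℝ) (hw : IsWeight l) (hw' : IsWeight l')
    (ho : IsOrdered l) (ho' : IsOrdered l')
    (h1 : 1 / 2 < l 0) (h1' : 1 / 2 < l' 0)
    (hS : SLOCCto (rhoBD l) (rhoBD l')) :
    l' 0 ≤ l 0 ∧
    (1 - 2 * l' 1) * (l 2 + l 3) ≤ (1 - 2 * l 1) * (l' 2 + l' 3) ∧
    (1 - 2 * l' 1 - 2 * l' 2) * l 3 ≤ (1 - 2 * l 1 - 2 * l 2) * l' 3 := by
  obtain ⟨N, A, B, c, hc, h⟩ := hS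
  obtain ⟨w0, w1⟩ := hw
  obtain ⟨w0', w1'⟩ := hw'
  simp only [Fin.sum_univ_four] at w1 w1'
  have hw := weights l l' N A B c h
  set m : Fin N → Fin 4 → ℝ := fun k j => ∑ i, l i * normSq (OO (A k) (B k) j i) with hm
  have hl : ∀ j, l' j = c * ∑ k, m k j := hw
  have hk := fun k => single (OO (A k) (B k)) _ (OO_col (A k) (B k)) (OO_row (A k) (B k)) l (m k)
    (fun j => rfl) w0 ho (by linarith)
  clear_value m
  have g : ∀ (a : ℝ) (s : Fin 4 → ℝ), (∀ k, (m k 0 - m k 1 - m k 2 - m k 3) * a ≤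
      (l 0 - l 1 - l 2 - l 3) * (∑ j, s j * m k j)) →
      (l' 0 - l' 1 - l' 2 - l' 3) * a ≤ (l 0 - l 1 - l 2 - l 3) * (∑ j, s j * l' j) := by
    intro a s hs
    have := mul_le_mul_of_nonneg_left (Finset.sum_le_sum fun k (_ : k ∈ Finset.univ) => hs k) hc.le
    rw [← Finset.sum_mul, ← Finset.mul_sum] at this
    simp only [Fin.sum_univ_four, Finset.sum_sub_distrib, Finset.sum_add_distrib,
      ← Finset.mul_sum] at this
    simp only [Fin.sum_univ_four, hl]
    linarith
  have g1 := g _ ![1, 1, 1, 1] (fun k => by simpa [Fin.sum_univ_four] using (hk k).1)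
  have g2 := g _ ![0, 0, 1, 1] (fun k => by simpa [Fin.sum_univ_four] using (hk k).2.1)
  have g3 := g _ ![0, 0, 0, 1] (fun k => by simpa [Fin.sum_univ_four] using (hk k).2.2)
  simp [Fin.sum_univ_four] at g1 g2 g3
  rw [w1, w1'] at g1
  have e : l 0 = 1 - l 1 - l 2 - l 3 := by linarith
  have e' : l' 0 = 1 - l' 1 - l' 2 - l' 3 := by linarith
  refine ⟨by linarith, ?_, ?_⟩
  · rw [e, e'] at g2
    linarith
  · rw [e, e'] at g3
    linarith

end Paper
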